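/- Suppose 0 < t₀ < t₁ < 1 and f, g : [0,5] → ℝ are continuous and strictly positive, and suppose inf_{x ∈ [0,5]} (L_{t₀} f)(x)/f(x) > 1 and sup_{x ∈ [0,5]} (L_{t₁} g)(x)/g(x) < 1. Then t₀ < dim_H(J_T) < t₁, where J_T is the smallest nonempty closed subset of [0,5] with J_T = S₋₁(J_T) ∪ S₊₁(J_T). -/

import Mathlib

open Set MeasureTheory

/-- The two inverse branches of the decimation polynomial `R(x) = x(5-x)`
associated to the Sierpiński triangle. -/
noncomputable def S (ε : ℝ) (x : ℝ) : ℝ := (5 + ε * Real.sqrt (25 - 4 * x)) / 2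

/-- The transfer operator `(L_t f)(x) = (25-4x)^{-t/2} (f(S₋₁x) + f(S₊₁x))`. -/
noncomputable def L (t : ℝ) (f : ℝ → ℝ) (x : ℝ) : ℝ :=
  (25 - 4 * x) ^ (-t / 2) * (f (S (-1) x) + f (S 1 x))

/-!
Near a point `x` each branch `S ε` multiplies distances by nearly `w x = (25 - 4 x) ^ (-1 / 2)`, so
the transfer operator `L_t` sends the indicator of a small ball to at most nearly `(ℓ / ℓ') ^ t`
times the indicator of a ball, where `ℓ` and `ℓ' > ℓ` are the old and the new radius.

* If `r f ≤ L_t f` with `r > 1`, the slack `r` absorbs the distortion, so that `L_t ^ n` of the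
  indicator of a ball of radius `ℓ` is at most `C ℓ ^ t L_t ^ n f` once `n` is large. Summing over
  a finite cover bounds `∑ ℓ ^ t` below, hence the Hausdorff measure of exponent `t` is positive.
* If `r L_t g ≤ g` with `r > 1`, pulling a cover by balls back through `n` levels of branches gives
  covers of arbitrarily small mesh for which `∑ ℓ ^ t g` does not increase, hence the Hausdorff
  measure of exponent `t` is finite.

Strict inequalities hold with such an `r` by compactness, and they persist when `t` is moved a
little, which makes both bounds on the dimension strict.
-/

section Compactness

open Filter Topology Uniformity

variable {X ι : Type*}

lemma exists_pos_forall_le_of_isCompact [TopologicalSpace X] [Finite ι] {K : ι → Set X}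
    (hK : ∀ i, IsCompact (K i)) {v : ι → X → ℝ} (hv : ∀ i, ContinuousOn (v i) (K i))
    (hpos : ∀ i, ∀ x ∈ K i, 0 < v i x) : ∃ a > 0, ∀ i, ∀ x ∈ K i, a ≤ v i x := by
  choose b hb hbv using fun i => (hK i).exists_forall_le' (hv i) (hpos i)
  have hsmall : ∀ᶠ a in 𝓝[>] (0 : ℝ), ∀ i, a < b i :=
    eventually_all.2 fun i => nhdsWithin_le_nhds (eventually_lt_nhds (hb i))
  obtain ⟨a, ha, ha0⟩ := (hsmall.and self_mem_nhdsWithin).exists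
  exact ⟨a, ha0, fun i x hx => (ha i).le.trans (hbv i x hx)⟩

lemma exists_one_lt_smul_le [TopologicalSpace X] [CompactSpace X] {u v : X → ℝ}
    (hu : Continuous u) (hv : Continuous v) (huv : ∀ x, u x < v x) :
    ∃ r : ℝ, 1 < r ∧ r • u ≤ v := by
  obtain ⟨c, hc, hcuv⟩ := isCompact_univ.exists_forall_le' (hv.sub hu).continuousOn
    fun x _ => sub_pos.2 (huv x)
  obtain ⟨M, hM⟩ := isCompact_univ.exists_bound_of_continuousOn hu.continuousOn
  have hM0 : 0 < |M| + 1 := by positivity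
  refine ⟨1 + c / (|M| + 1), by linarith [div_pos hc hM0], fun x => ?_⟩
  have huM : u x ≤ |M| + 1 :=
    ((le_abs_self _).trans (hM x trivial)).trans (by linarith [le_abs_self M])
  have hcx : c ≤ v x - u x := hcuv x trivial
  have hcu : c / (|M| + 1) * u x ≤ c := by
    rw [div_mul_eq_mul_div, div_le_iff₀ hM0]
    gcongr
  simp only [Pi.smul_apply, smul_eq_mul]
  linarith

lemma eventually_uniformity_le_mul [UniformSpace X] [CompactSpace X] {v : X → ℝ}
    (hv : Continuous v) (hpos : ∀ x, 0 < v x) {η : ℝ} (hη : 1 < η) :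
    ∀ᶠ p in 𝓤 X, v p.1 ≤ η * v p.2 := by
  obtain ⟨m, hm, hmv⟩ := isCompact_univ.exists_forall_le' hv.continuousOn fun x _ => hpos x
  have hm' : 0 < (η - 1) * m := mul_pos (sub_pos.2 hη) hm
  filter_upwards [CompactSpace.uniformContinuous_of_continuous hv
    (Metric.dist_mem_uniformity hm')] with p hp
  have hlt : v p.1 - v p.2 < (η - 1) * m := (le_abs_self _).trans_lt hp
  have hle : (η - 1) * m ≤ (η - 1) * v p.2 := by
    have := hmv p.2 trivial
    gcongr
  linarith

lemma forall_lt_of_one_lt_sInf_div [TopologicalSpace X] {K : Set X} (hK : IsCompact K)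
    {u v : X → ℝ} (hu : ContinuousOn u K) (hv : ContinuousOn v K) (hpos : ∀ x ∈ K, 0 < u x)
    (h : 1 < sInf ((fun x => v x / u x) '' K)) : ∀ x ∈ K, u x < v x := fun x hx =>
  (one_lt_div (hpos x hx)).1 (h.trans_le (csInf_le
    (hK.bddBelow_image (hv.div hu fun x hx => (hpos x hx).ne')) (mem_image_of_mem _ hx)))

lemma forall_lt_of_sSup_div_lt_one [TopologicalSpace X] {K : Set X} (hK : IsCompact K)
    {u v : X → ℝ} (hu : ContinuousOn u K) (hv : ContinuousOn v K) (hpos : ∀ x ∈ K, 0 < u x)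
    (h : sSup ((fun x => v x / u x) '' K) < 1) : ∀ x ∈ K, v x < u x := fun x hx =>
  (div_lt_one (hpos x hx)).1 ((le_csSup (hK.bddAbove_image
    (hv.div hu fun x hx => (hpos x hx).ne')) (mem_image_of_mem _ hx)).trans_lt h)

end Compactness

section HausdorffMeasure

open Metric Topology

variable {X : Type*} [MetricSpace X]

lemma exists_subset_ball_rpow_le [Nonempty X] {t : ℝ} (ht : 0 < t) {T : Set X}
    (hT : ediam T ≠ ⊤) {e : NNReal} (he : 0 < e) :
    ∃ (x : X) (ℓ : ℝ), 0 < ℓ ∧ T ⊆ ball x ℓ ∧ ENNReal.ofReal (ℓ ^ t) ≤ ediam T ^ t + e := by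
  have hpow : ∀ᶠ ℓ in 𝓝[>] diam T, ℓ ^ t < diam T ^ t + e :=
    nhdsWithin_le_nhds ((Real.continuousAt_rpow_const _ _ (Or.inr ht.le)).eventually_lt_const
      (lt_add_of_pos_right _ (by exact_mod_cast he)))
  obtain ⟨ℓ, hℓ, hdiam⟩ := (hpow.and self_mem_nhdsWithin).exists
  obtain ⟨x, hx⟩ : ∃ x, T ⊆ ball x ℓ := by
    rcases T.eq_empty_or_nonempty with rfl | ⟨x, hx⟩
    · exact ⟨Classical.arbitrary X, empty_subset _⟩
    · exact ⟨x, fun y hy => (dist_le_diam_of_mem' hT hy hx).trans_lt hdiam⟩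
  refine ⟨x, ℓ, diam_nonneg.trans_lt hdiam, hx, ?_⟩
  calc ENNReal.ofReal (ℓ ^ t) ≤ ENNReal.ofReal (diam T ^ t + e) := ENNReal.ofReal_le_ofReal hℓ.le
    _ = ediam T ^ t + e := by
      rw [ENNReal.ofReal_add (Real.rpow_nonneg diam_nonneg t) e.coe_nonneg,
        ← ENNReal.ofReal_rpow_of_nonneg diam_nonneg ht.le, diam, ENNReal.ofReal_toReal hT,
        ENNReal.ofReal_coe_nnreal]

lemma hausdorffMeasure_ne_zero_of_forall_finite_cover [Nonempty X] [MeasurableSpace X]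
    [BorelSpace X] {K : Set X} (hK : IsCompact K) {t c : ℝ} (ht : 0 < t) (hc : 0 < c)
    (h : ∀ (s : Finset ℕ) (x : ℕ → X) (ℓ : ℕ → ℝ), (∀ n, 0 < ℓ n) →
      K ⊆ ⋃ n ∈ s, closedBall (x n) (ℓ n) → c ≤ ∑ n ∈ s, ℓ n ^ t) :
    μH[t] K ≠ 0 := by
  intro hzero
  have hc2 : 0 < ENNReal.ofReal (c / 2) := ENNReal.ofReal_pos.2 (by positivity)
  obtain ⟨T, hcov, hdiam, hsum⟩ : ∃ T : ℕ → Set X, K ⊆ ⋃ n, T n ∧ (∀ n, ediam (T n) ≤ 1) ∧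
      ∑' n, ⨆ _ : (T n).Nonempty, ediam (T n) ^ t < ENNReal.ofReal (c / 2) := by
    rw [Measure.hausdorffMeasure_apply, ← bot_eq_zero, iSup₂_eq_bot] at hzero
    simpa only [iInf_lt_iff, exists_prop] using (hzero 1 one_pos).trans_lt hc2
  have hT : ∀ n, ⨆ _ : (T n).Nonempty, ediam (T n) ^ t = ediam (T n) ^ t := fun n => by
    rcases (T n).eq_empty_or_nonempty with hn | hn <;> simp [hn, ht]
  simp only [hT] at hsum
  obtain ⟨e, he, hesum⟩ := ENNReal.exists_pos_sum_of_countable hc2.ne' ℕ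
  choose x ℓ hℓ hsub hle using fun n =>
    exists_subset_ball_rpow_le ht (ne_top_of_le_ne_top ENNReal.one_ne_top (hdiam n)) (he n)
  obtain ⟨s, hs⟩ := hK.elim_finite_subcover (fun n => ball (x n) (ℓ n)) (fun _ => isOpen_ball)
    (hcov.trans (iUnion_mono hsub))
  have hlt : ENNReal.ofReal c < ENNReal.ofReal c :=
    calc ENNReal.ofReal c
        ≤ ENNReal.ofReal (∑ n ∈ s, ℓ n ^ t) := ENNReal.ofReal_le_ofReal
          (h s x ℓ hℓ (hs.trans (iUnion₂_mono fun _ _ => ball_subset_closedBall)))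
      _ = ∑ n ∈ s, ENNReal.ofReal (ℓ n ^ t) :=
          ENNReal.ofReal_sum_of_nonneg fun n _ => Real.rpow_nonneg (hℓ n).le t
      _ ≤ ∑' n, (ediam (T n) ^ t + e n) :=
          (Finset.sum_le_sum fun n _ => hle n).trans (ENNReal.sum_le_tsum s)
      _ = ∑' n, ediam (T n) ^ t + ∑' n, (e n : ENNReal) := ENNReal.tsum_add
      _ < ENNReal.ofReal (c / 2) + ENNReal.ofReal (c / 2) := ENNReal.add_lt_add hsum hesum
      _ = ENNReal.ofReal c := by
          rw [← ENNReal.ofReal_add (by positivity) (by positivity), add_halves]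
  exact hlt.false

lemma pre_ediam_rpow_closedBall_le {t : ℝ} (ht : 0 ≤ t) (x : X) {ℓ : ℝ}
    (hℓ : 0 ≤ ℓ) {ε : ENNReal} (hε : ENNReal.ofReal (2 * ℓ) ≤ ε) :
    OuterMeasure.mkMetric'.pre (fun A : Set X => ediam A ^ t) ε (closedBall x ℓ) ≤
      ENNReal.ofReal (2 ^ t * ℓ ^ t) := by
  have hdiam : ediam (closedBall x ℓ) ≤ ENNReal.ofReal (2 * ℓ) := by
    rw [← closedEBall_ofReal hℓ, ENNReal.ofReal_mul two_pos.le, ENNReal.ofReal_ofNat]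
    exact ediam_closedEBall_le
  refine (OuterMeasure.mkMetric'.pre_le (hdiam.trans hε)).trans ?_
  rw [← Real.mul_rpow two_pos.le hℓ, ← ENNReal.ofReal_rpow_of_nonneg (by positivity) ht]
  exact ENNReal.rpow_le_rpow hdiam ht

lemma hausdorffMeasure_le_of_forall_pre_le [MeasurableSpace X] [BorelSpace X] {t : ℝ} {A : Set X}
    {b : ENNReal} (h : ∀ ε : ENNReal, 0 < ε →
      OuterMeasure.mkMetric'.pre (fun A : Set X => ediam A ^ t) ε A ≤ b) : μH[t] A ≤ b := by
  rw [Measure.hausdorffMeasure, ← OuterMeasure.coe_mkMetric]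
  exact le_of_tendsto (OuterMeasure.mkMetric'.tendsto_pre _ _)
    (eventually_nhdsWithin_of_forall h)

end HausdorffMeasure

lemma exists_mem_Ioo_one_lt_rpow_mul {a r b : ℝ} (ha : 0 < a) (hr : 1 < r) (hb : 0 < b) :
    ∃ u ∈ Ioo 0 b, 1 < a ^ u * r := by
  have hcont : ContinuousAt (fun u : ℝ => a ^ u * r) 0 :=
    (Real.continuousAt_const_rpow ha.ne').mul_const r
  have hlt := hcont.eventually_const_lt (u := 1) (by simpa)
  obtain ⟨u, hu, hub⟩ :=
    ((hlt.filter_mono nhdsWithin_le_nhds).and (Ioo_mem_nhdsGT hb)).exists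
  exact ⟨u, hub, hu⟩

lemma one_le_inv_mul_rpow_smul {X : Type*} {t m δ ℓ : ℝ} (ht : 0 ≤ t) (hm : 0 < m) (hδ : 0 < δ)
    (hℓ : δ ≤ ℓ) {f : X → ℝ} (hf : ∀ x, m ≤ f x) : 1 ≤ ((m * δ ^ t)⁻¹ * ℓ ^ t) • f := fun x =>
  calc (1 : ℝ) = (m * δ ^ t)⁻¹ * (δ ^ t * m) := by
        rw [mul_comm m]
        exact (inv_mul_cancel₀ (mul_pos (Real.rpow_pos_of_pos hδ t) hm).ne').symm
    _ ≤ (m * δ ^ t)⁻¹ * (ℓ ^ t * f x) := by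
        have := hf x
        have := hδ.le.trans hℓ
        gcongr
    _ = (m * δ ^ t)⁻¹ * ℓ ^ t * f x := (mul_assoc ..).symm

lemma le_smul_sum_indicator_of_cover {X α : Type*} {s : Finset α} {A : α → Set X} {f : X → ℝ}
    {M : ℝ} (hM : 0 ≤ M) (hf : ∀ x, f x ≤ M) (hA : univ ⊆ ⋃ k ∈ s, A k) :
    f ≤ M • ∑ k ∈ s, (A k).indicator 1 := fun x => by
  obtain ⟨k, hk, hx⟩ := mem_iUnion₂.1 (hA (mem_univ x))
  have hone : 1 ≤ ∑ k ∈ s, (A k).indicator (1 : X → ℝ) x :=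
    calc (1 : ℝ) = (A k).indicator 1 x := (indicator_of_mem hx 1).symm
      _ ≤ ∑ k ∈ s, (A k).indicator 1 x := Finset.single_le_sum
          (fun j _ => indicator_nonneg (fun _ _ => zero_le_one) x) hk
  rw [Pi.smul_apply, smul_eq_mul, Finset.sum_apply]
  exact (hf x).trans (le_mul_of_one_le_right hM hone)

section ConformalIFS

open Filter Metric Topology Uniformity

variable {X ι : Type*} {φ : ι → X → X} {w : ι → X → ℝ}

/-- The Ruelle transfer operator at exponent `t` of the inverse branches `φ i`, whose derivatives
have absolute value `w i`. -/
noncomputable def transferOp [Fintype ι] (φ : ι → X → X) (w : ι → X → ℝ) (t : ℝ) :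
    (X → ℝ) →ₗ[ℝ] X → ℝ where
  toFun f x := ∑ i, w i x ^ t * f (φ i x)
  map_add' f g := by ext x; simp only [Pi.add_apply, mul_add, Finset.sum_add_distrib]
  map_smul' c f := by
    ext x; simp only [Pi.smul_apply, smul_eq_mul, Finset.mul_sum, mul_left_comm, RingHom.id_apply]

lemma transferOp_apply [Fintype ι] (t : ℝ) (f : X → ℝ) (x : X) :
    transferOp φ w t f x = ∑ i, w i x ^ t * f (φ i x) := rfl

lemma transferOp_monotone [Fintype ι] (hw : ∀ i x, 0 ≤ w i x) (t : ℝ) :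
    Monotone (transferOp φ w t) := fun _ _ hfg _ =>
  Finset.sum_le_sum fun i _ => mul_le_mul_of_nonneg_left (hfg _) (Real.rpow_nonneg (hw i _) t)

lemma monotone_transferOp_pow [Fintype ι] (hw : ∀ i x, 0 ≤ w i x) (t : ℝ) (n : ℕ) :
    Monotone (transferOp φ w t ^ n) := by
  rw [Module.End.coe_pow]
  exact (transferOp_monotone hw t).iterate n

lemma le_transferOp_pow [Fintype ι] (hw : ∀ i x, 0 ≤ w i x) {t : ℝ} {f : X → ℝ}
    (hf : f ≤ transferOp φ w t f) (n : ℕ) : f ≤ (transferOp φ w t ^ n) f := by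
  rw [Module.End.coe_pow]
  exact (transferOp_monotone hw t).monotone_iterate_of_le_map hf n.zero_le

lemma rpow_smul_transferOp_le [Fintype ι] {a t u : ℝ} (ha : 0 < a) (haw : ∀ i x, a ≤ w i x)
    (hu : 0 ≤ u) {f : X → ℝ} (hf : 0 ≤ f) :
    a ^ u • transferOp φ w t f ≤ transferOp φ w (t + u) f := fun x => by
  simp only [Pi.smul_apply, smul_eq_mul, transferOp_apply, Finset.mul_sum]
  refine Finset.sum_le_sum fun i _ => ?_
  have hw : 0 < w i x := ha.trans_le (haw i x)
  calc a ^ u * (w i x ^ t * f (φ i x))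
      ≤ w i x ^ u * (w i x ^ t * f (φ i x)) := mul_le_mul_of_nonneg_right
        (Real.rpow_le_rpow ha.le (haw i x) hu) (mul_nonneg (Real.rpow_nonneg hw.le t) (hf _))
    _ = w i x ^ (t + u) * f (φ i x) := by rw [← mul_assoc, ← Real.rpow_add hw, add_comm]

lemma transferOp_const_mul_weight [Fintype ι] (hw : ∀ i x, 0 ≤ w i x) {c : ℝ} (hc : 0 ≤ c)
    (t : ℝ) (f : X → ℝ) :
    transferOp φ (fun i x => c * w i x) t f = c ^ t • transferOp φ w t f := by
  ext x
  simp only [transferOp_apply, Real.mul_rpow hc (hw _ x), Pi.smul_apply, smul_eq_mul,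
    Finset.mul_sum, mul_assoc]

lemma transferOp_indicator_le [Fintype ι] {t b : ℝ} (hb : 0 ≤ b) {A B : Set X} {i : ι}
    (h : ∀ j y, φ j y ∈ A → j = i ∧ y ∈ B ∧ w i y ^ t ≤ b) :
    transferOp φ w t (A.indicator 1) ≤ b • B.indicator 1 := fun y => by
  rw [transferOp_apply, Finset.sum_eq_single i (fun j _ hj => by
    rw [indicator_of_notMem fun hmem => hj (h j y hmem).1, mul_zero]) (by simp),
    Pi.smul_apply, smul_eq_mul]
  by_cases hy : φ i y ∈ A
  · obtain ⟨-, hyB, hwb⟩ := h i y hy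
    simpa only [indicator_of_mem hy, indicator_of_mem hyB, Pi.one_apply, mul_one] using hwb
  · rw [indicator_of_notMem hy, mul_zero]
    exact mul_nonneg hb (indicator_nonneg (fun _ _ => zero_le_one) y)

lemma outerMeasure_preimage_iterate_le [MetricSpace X] [Fintype ι] {κ δ : ℝ} (hκ : κ ≤ 1)
    (hw : ∀ i x, w i x ∈ Icc 0 κ)
    (hφ : ∀ i x, ∀ ℓ ≤ δ, φ i '' closedBall x ℓ ⊆ closedBall (φ i x) (w i x * ℓ))
    {T : X → X} (hT : ∀ x, ∃ i, φ i (T x) = x) {t C : ℝ} (hC : 0 ≤ C) {g : X → ℝ}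
    (hgpos : ∀ x, 0 ≤ g x) (hg : transferOp φ w t g ≤ g) {ν : OuterMeasure X} {ε : ℝ}
    (hν : ∀ x ℓ, 0 ≤ ℓ → ℓ ≤ ε → ν (closedBall x ℓ) ≤ ENNReal.ofReal (C * (ℓ ^ t * g x)))
    (n : ℕ) (x : X) {ℓ : ℝ} (hℓ : ℓ ∈ Icc 0 δ) (hε : κ ^ n * ℓ ≤ ε) :
    ν (T^[n] ⁻¹' closedBall x ℓ) ≤ ENNReal.ofReal (C * (ℓ ^ t * g x)) := by
  induction n generalizing x ℓ with
  | zero => exact hν x ℓ hℓ.1 (by simpa using hε)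
  | succ n ih =>
    have hcover : T^[n + 1] ⁻¹' closedBall x ℓ ⊆
        ⋃ i, T^[n] ⁻¹' closedBall (φ i x) (w i x * ℓ) := fun y hy => by
      obtain ⟨i, hi⟩ := hT (T^[n] y)
      rw [mem_preimage, Function.iterate_succ_apply'] at hy
      exact mem_iUnion.2 ⟨i, hφ i x ℓ hℓ.2 ⟨_, hy, hi⟩⟩
    have hradius (i : ι) : w i x * ℓ ≤ κ * ℓ := mul_le_mul_of_nonneg_right (hw i x).2 hℓ.1
    have hκ0 (i : ι) : 0 ≤ κ := (hw i x).1.trans (hw i x).2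
    calc ν (T^[n + 1] ⁻¹' closedBall x ℓ)
        ≤ ∑ i, ν (T^[n] ⁻¹' closedBall (φ i x) (w i x * ℓ)) :=
          (measure_mono hcover).trans (measure_iUnion_fintype_le ν _)
      _ ≤ ∑ i, ENNReal.ofReal (C * ((w i x * ℓ) ^ t * g (φ i x))) := by
          refine Finset.sum_le_sum fun i _ => ih (φ i x) ⟨mul_nonneg (hw i x).1 hℓ.1, ?_⟩ ?_
          · exact (hradius i).trans ((mul_le_of_le_one_left hℓ.1 hκ).trans hℓ.2)
          · rw [pow_succ, mul_assoc] at hε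
            exact (mul_le_mul_of_nonneg_left (hradius i) (pow_nonneg (hκ0 i) n)).trans hε
      _ = ENNReal.ofReal (C * (ℓ ^ t * transferOp φ w t g x)) := by
          rw [← ENNReal.ofReal_sum_of_nonneg fun i _ => mul_nonneg hC (mul_nonneg
            (Real.rpow_nonneg (mul_nonneg (hw i x).1 hℓ.1) t) (hgpos _)), transferOp_apply]
          simp only [Finset.mul_sum, Real.mul_rpow (hw _ x).1 hℓ.1]
          congr 1
          exact Finset.sum_congr rfl fun i _ => by ring
      _ ≤ ENNReal.ofReal (C * (ℓ ^ t * g x)) := by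
          have := hℓ.1
          have := hg x
          gcongr

lemma hausdorffMeasure_univ_ne_top [MetricSpace X] [CompactSpace X] [MeasurableSpace X]
    [BorelSpace X] [Fintype ι] (hsurj : ∀ x, ∃ i y, φ i y = x) {κ δ : ℝ} (hκ : κ ∈ Ico 0 1)
    (hw : ∀ i x, w i x ∈ Icc 0 κ) (hδ : 0 < δ)
    (hφ : ∀ i x, ∀ ℓ ≤ δ, φ i '' closedBall x ℓ ⊆ closedBall (φ i x) (w i x * ℓ))
    {t : ℝ} (ht : 0 ≤ t) {g : X → ℝ} (hgc : Continuous g) (hgpos : ∀ x, 0 < g x)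
    (hg : transferOp φ w t g ≤ g) : μH[t] (univ : Set X) ≠ ⊤ := by
  choose i₀ T hT using hsurj
  obtain ⟨m, hm, hmg⟩ := isCompact_univ.exists_forall_le' hgc.continuousOn fun x _ => hgpos x
  obtain ⟨c, -, hcfin, hcov⟩ := isCompact_univ.finite_cover_balls (X := X) hδ
  lift c to Finset X using hcfin
  refine ne_top_of_le_ne_top (b := ∑ x ∈ c, ENNReal.ofReal (2 ^ t / m * (δ ^ t * g x)))
    (ENNReal.sum_ne_top.2 fun _ _ => ENNReal.ofReal_ne_top)
    (hausdorffMeasure_le_of_forall_pre_le fun ε hε => ?_)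
  obtain ⟨p, hp, hpε⟩ := ENNReal.lt_iff_exists_nnreal_btwn.1 hε
  obtain ⟨n, hn⟩ : ∃ n, κ ^ n * δ ≤ p / 2 := by
    have hlim : Tendsto (fun n => κ ^ n * δ) atTop (𝓝 0) := by
      simpa using (tendsto_pow_atTop_nhds_zero_of_lt_one hκ.1 hκ.2).mul_const δ
    exact (hlim.eventually_le_const (half_pos (by exact_mod_cast hp))).exists
  have hcover : univ ⊆ ⋃ x ∈ c, T^[n] ⁻¹' closedBall x δ := fun y _ => by
    obtain ⟨x, hx, hyx⟩ := mem_iUnion₂.1 (hcov (mem_univ (T^[n] y)))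
    exact mem_iUnion₂.2 ⟨x, hx, ball_subset_closedBall hyx⟩
  refine (measure_mono hcover).trans ((measure_biUnion_finset_le c _).trans
    (Finset.sum_le_sum fun x _ => ?_))
  refine outerMeasure_preimage_iterate_le hκ.2.le hw hφ (fun x => ⟨i₀ x, hT x⟩) (by positivity)
    (fun x => (hgpos x).le) hg (fun x ℓ hℓ hℓp => ?_) n x ⟨hδ.le, le_rfl⟩ hn
  have hℓε : ENNReal.ofReal (2 * ℓ) ≤ ε :=
    (ENNReal.ofReal_le_of_le_toReal (by simp; linarith)).trans hpε.le
  refine (pre_ediam_rpow_closedBall_le ht x hℓ hℓε).trans (ENNReal.ofReal_le_ofReal ?_)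
  calc 2 ^ t * ℓ ^ t = 2 ^ t / m * (ℓ ^ t * m) := by field_simp
    _ ≤ 2 ^ t / m * (ℓ ^ t * g x) := by
      have := hmg x trivial
      gcongr

/-- `X` is the disjoint union of its images under the injective maps `φ i`, and each `φ i` is
infinitesimally a contracting similarity, with ratio `w i x ∈ (0, 1)` at `x`. Conformality is
encoded without derivatives: two points at small distance have their distance multiplied by `w i`
up to a factor as close to `1` as desired. -/
structure IsConformalIFS [MetricSpace X] (φ : ι → X → X) (w : ι → X → ℝ) : Prop where
  bijective : Function.Bijective fun p : ι × X => φ p.1 p.2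
  weight_mem : ∀ i x, w i x ∈ Ioo (0 : ℝ) 1
  continuous_weight : ∀ i, Continuous (w i)
  conformal : ∀ η > (1 : ℝ), ∀ᶠ p in 𝓤 X, ∀ i,
    dist (φ i p.1) (φ i p.2) ≤ η * (w i p.1 * dist p.1 p.2) ∧
      w i p.1 * dist p.1 p.2 ≤ η * dist (φ i p.1) (φ i p.2)

namespace IsConformalIFS

variable [MetricSpace X] (h : IsConformalIFS φ w)

include h

lemma continuous (i : ι) : Continuous (φ i) := by
  refine UniformContinuous.continuous (tendsto_uniformity_iff_dist_tendsto_zero.2 ?_)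
  have hdist : Tendsto (fun p : X × X => 2 * dist p.1 p.2) (𝓤 X) (𝓝 0) := by
    simpa using (tendsto_uniformity_iff_dist_tendsto_zero.1 uniformContinuous_id).const_mul 2
  refine squeeze_zero' (Eventually.of_forall fun _ => dist_nonneg) ?_ hdist
  filter_upwards [h.conformal 2 one_lt_two] with p hp
  have hw : w i p.1 * dist p.1 p.2 ≤ dist p.1 p.2 :=
    mul_le_of_le_one_left dist_nonneg (h.weight_mem i p.1).2.le
  linarith [(hp i).1]

lemma continuous_transferOp [Fintype ι] (t : ℝ) {f : X → ℝ} (hf : Continuous f) :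
    Continuous (transferOp φ w t f) :=
  continuous_finsetSum _ fun i _ => ((h.continuous_weight i).rpow_const fun x =>
    Or.inl (h.weight_mem i x).1.ne').mul (hf.comp (h.continuous i))

lemma exists_image_closedBall_subset {η : ℝ} (hη : 1 < η) :
    ∃ δ > 0, ∀ i x, ∀ ℓ ≤ δ, φ i '' closedBall x ℓ ⊆ closedBall (φ i x) (η * w i x * ℓ) := by
  obtain ⟨δ, hδ, hconf⟩ := mem_uniformity_dist.1 (h.conformal η hη)
  refine ⟨δ / 2, half_pos hδ, fun i x ℓ hℓ => ?_⟩
  rintro _ ⟨y, hy, rfl⟩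
  have hxy : dist x y ≤ ℓ := mem_closedBall'.1 hy
  have hw : 0 ≤ w i x := (h.weight_mem i x).1.le
  rw [mem_closedBall', mul_assoc]
  exact (hconf (by linarith) i).1.trans (by gcongr)

variable [CompactSpace X]

lemma exists_pos_le_weight [Finite ι] : ∃ a > 0, ∀ i x, a ≤ w i x := by
  simpa using exists_pos_forall_le_of_isCompact (fun _ : ι => isCompact_univ)
    (fun i => (h.continuous_weight i).continuousOn) fun i x _ => (h.weight_mem i x).1

lemma exists_weight_le_lt_one [Finite ι] : ∃ ρ ∈ Ioo (0 : ℝ) 1, ∀ i x, w i x ≤ ρ := by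
  obtain ⟨b, hb, hbw⟩ := exists_pos_forall_le_of_isCompact (fun _ : ι => isCompact_univ)
    (fun i => (continuous_const.sub (h.continuous_weight i)).continuousOn)
    fun i x _ => sub_pos.2 (h.weight_mem i x).2
  refine ⟨max (1 - b) 2⁻¹, ⟨by positivity, max_lt (by linarith) (by norm_num)⟩, fun i x => ?_⟩
  exact le_max_of_le_left (le_sub_comm.1 (hbw i x trivial))

lemma exists_pos_forall_dist_lt [Finite ι] {ε : ℝ} (hε : 0 < ε) :
    ∃ δ > 0, ∀ i j x y, dist (φ i x) (φ j y) < δ → i = j ∧ dist x y < ε := by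
  obtain ⟨δ, hδ, hsep⟩ := exists_pos_forall_le_of_isCompact (ι := ι × ι)
    (K := fun k => {q : X × X | k.1 = k.2 → ε ≤ dist q.1 q.2})
    (v := fun k q => dist (φ k.1 q.1) (φ k.2 q.2))
    (fun k => (isClosed_imp isOpen_const
      (isClosed_le continuous_const continuous_dist)).isCompact)
    (fun k => (((h.continuous k.1).comp continuous_fst).dist
      ((h.continuous k.2).comp continuous_snd)).continuousOn)
    fun k q hq => dist_pos.2 fun heq => by
      obtain ⟨hk, hx⟩ := Prod.ext_iff.1 (h.bijective.1 heq : (k.1, q.1) = (k.2, q.2))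
      exact (hq hk).not_gt (by rwa [show q.1 = q.2 from hx, dist_self])
  refine ⟨δ, hδ, fun i j x y hlt => ?_⟩
  by_contra hij
  exact (hsep (i, j) (x, y) fun hk => not_lt.1 fun hxy => hij ⟨hk, hxy⟩).not_gt hlt

lemma exists_pos_forall_mem_closedBall [Finite ι] {η : ℝ} (hη : 1 < η) :
    ∃ δ > 0, ∀ ℓ < δ, ∀ i j x y, φ j y ∈ closedBall (φ i x) ℓ →
      j = i ∧ y ∈ closedBall x (η * ℓ / w i x) ∧ w i y ≤ η * w i x := by
  have hlocal := (h.conformal η hη).and (eventually_all.2 fun i =>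
    eventually_uniformity_le_mul (h.continuous_weight i) (fun x => (h.weight_mem i x).1) hη)
  obtain ⟨ε, hε, hεlocal⟩ := mem_uniformity_dist.1 (hlocal.and (tendsto_swap_uniformity hlocal))
  obtain ⟨δ, hδ, hsep⟩ := h.exists_pos_forall_dist_lt hε
  refine ⟨δ, hδ, fun ℓ hℓ i j x y hy => ?_⟩
  obtain ⟨rfl, hxy⟩ := hsep j i y x (hy.trans_lt hℓ)
  obtain ⟨⟨-, hratio⟩, hconf, -⟩ := hεlocal hxy
  refine ⟨rfl, ?_, hratio j⟩
  rw [mem_closedBall', le_div_iff₀' (h.weight_mem j x).1]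
  exact (hconf j).2.trans (mul_le_mul_of_nonneg_left (mem_closedBall'.1 hy) (by linarith))

lemma exists_transferOp_indicator_closedBall_le [Fintype ι] {t : ℝ} (ht : 0 < t) {r : ℝ}
    (hr : 1 < r) :
    ∃ δ > 0, ∃ κ ∈ Ioo (0 : ℝ) 1, ∀ x, ∀ ℓ ∈ Ioo 0 δ, ∃ z ℓ', ℓ ≤ κ * ℓ' ∧
      transferOp φ w t ((closedBall x ℓ).indicator 1) ≤
        (r * (ℓ / ℓ') ^ t) • (closedBall z ℓ').indicator 1 := by
  obtain ⟨η, hη, hηr⟩ : ∃ η > 1, (η ^ 2) ^ t = r := by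
    have hpow : 1 < r ^ t⁻¹ := Real.one_lt_rpow hr (inv_pos.2 ht)
    refine ⟨√(r ^ t⁻¹), Real.lt_sqrt_of_sq_lt (by rwa [one_pow]), ?_⟩
    rw [Real.sq_sqrt (zero_le_one.trans hpow.le),
      Real.rpow_inv_rpow (zero_le_one.trans hr.le) ht.ne']
  obtain ⟨δ, hδ, hball⟩ := h.exists_pos_forall_mem_closedBall hη
  obtain ⟨κ, hκ, hwκ⟩ := h.exists_weight_le_lt_one
  refine ⟨δ, hδ, κ, hκ, fun x ℓ hℓ => ?_⟩
  obtain ⟨⟨i, z⟩, rfl⟩ := h.bijective.2 x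
  have hw : 0 < w i z := (h.weight_mem i z).1
  have hℓ0 : 0 < ℓ := hℓ.1
  have hcoef : (η * w i z) ^ t = r * (ℓ / (η * ℓ / w i z)) ^ t := by
    rw [← hηr, ← Real.mul_rpow (by positivity) (by positivity)]
    congr 1
    field_simp
  refine ⟨z, η * ℓ / w i z, ?_, transferOp_indicator_le (i := i) (by positivity) fun j y hy => ?_⟩
  · calc ℓ = w i z * (ℓ / w i z) := (mul_div_cancel₀ ℓ hw.ne').symm
      _ ≤ κ * (η * ℓ / w i z) := by
          have := hwκ i z
          have := hκ.1
          gcongr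
          exact le_mul_of_one_le_left hℓ0.le hη.le
  · obtain ⟨rfl, hyz, hratio⟩ := hball ℓ hℓ.2 i j z y hy
    exact ⟨rfl, hyz, hcoef ▸ Real.rpow_le_rpow (h.weight_mem j y).1.le hratio ht.le⟩

lemma exists_transferOp_pow_indicator_closedBall_le [Fintype ι] {t : ℝ} (ht : 0 < t) {r m : ℝ}
    (hr : 1 < r) (hm : 0 < m) {f : X → ℝ} (hmf : ∀ x, m ≤ f x) (hf : r • f ≤ transferOp φ w t f) :
    ∃ C > 0, ∃ δ > 0, ∃ κ ∈ Ioo (0 : ℝ) 1, ∀ (n : ℕ) (x : X) (ℓ : ℝ), δ * κ ^ n ≤ ℓ →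
      (transferOp φ w t ^ n) ((closedBall x ℓ).indicator 1) ≤
        (C * ℓ ^ t) • (transferOp φ w t ^ n) f := by
  obtain ⟨δ, hδ, κ, hκ, hstep⟩ := h.exists_transferOp_indicator_closedBall_le ht hr
  have hmono := monotone_transferOp_pow (φ := φ) fun i x => (h.weight_mem i x).1.le
  have hlarge (x : X) (ℓ : ℝ) (hℓ : δ ≤ ℓ) :
      (closedBall x ℓ).indicator 1 ≤ ((m * δ ^ t)⁻¹ * ℓ ^ t) • f :=
    (indicator_le_self' fun _ _ => zero_le_one).trans
      (one_le_inv_mul_rpow_smul ht.le hm hδ hℓ hmf)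
  refine ⟨(m * δ ^ t)⁻¹, by positivity, δ, hδ, κ, hκ, fun n => ?_⟩
  induction n with
  | zero => exact fun x ℓ hℓ => hlarge x ℓ (by simpa using hℓ)
  | succ n ih =>
    intro x ℓ hℓ
    rcases le_or_gt δ ℓ with hδℓ | hℓδ
    · exact (hmono t (n + 1) (hlarge x ℓ hδℓ)).trans_eq (map_smul ..)
    have hℓ0 : 0 < ℓ := (mul_pos hδ (pow_pos hκ.1 _)).trans_le hℓ
    obtain ⟨z, ℓ', hκℓ', hle⟩ := hstep x ℓ ⟨hℓ0, hℓδ⟩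
    have hℓ'0 : 0 < ℓ' := pos_of_mul_pos_right (hℓ0.trans_le hκℓ') hκ.1.le
    have hℓ' : δ * κ ^ n ≤ ℓ' :=
      le_of_mul_le_mul_left (by rw [pow_succ] at hℓ; linarith) hκ.1
    have hcoef : (ℓ / ℓ') ^ t * ℓ' ^ t = ℓ ^ t := by
      rw [← Real.mul_rpow (div_pos hℓ0 hℓ'0).le hℓ'0.le, div_mul_cancel₀ _ hℓ'0.ne']
    rw [pow_succ, Module.End.mul_apply, Module.End.mul_apply]
    calc (transferOp φ w t ^ n) (transferOp φ w t ((closedBall x ℓ).indicator 1))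
        ≤ (r * (ℓ / ℓ') ^ t) • (transferOp φ w t ^ n) ((closedBall z ℓ').indicator 1) :=
          (hmono t n hle).trans_eq (map_smul ..)
      _ ≤ (r * (ℓ / ℓ') ^ t) • ((m * δ ^ t)⁻¹ * ℓ' ^ t) • (transferOp φ w t ^ n) f :=
          smul_le_smul_of_nonneg_left (ih z ℓ' hℓ') (by positivity)
      _ = ((m * δ ^ t)⁻¹ * ℓ ^ t) • (transferOp φ w t ^ n) (r • f) := by
          rw [map_smul, smul_smul, smul_smul, ← hcoef]
          congr 1; ring
      _ ≤ ((m * δ ^ t)⁻¹ * ℓ ^ t) • (transferOp φ w t ^ n) (transferOp φ w t f) :=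
          smul_le_smul_of_nonneg_left (hmono t n hf) (by positivity)

lemma exists_pos_le_sum_rpow_of_cover [Fintype ι] [Nonempty X] {t : ℝ} (ht : 0 < t) {r : ℝ}
    (hr : 1 < r) {f : X → ℝ} (hfc : Continuous f) (hfpos : ∀ x, 0 < f x)
    (hf : r • f ≤ transferOp φ w t f) :
    ∃ c > 0, ∀ (s : Finset ℕ) (x : ℕ → X) (ℓ : ℕ → ℝ), (∀ k, 0 < ℓ k) →
      univ ⊆ ⋃ k ∈ s, closedBall (x k) (ℓ k) → c ≤ ∑ k ∈ s, ℓ k ^ t := by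
  obtain ⟨m, hm, hmf⟩ := isCompact_univ.exists_forall_le' hfc.continuousOn fun x _ => hfpos x
  obtain ⟨M, hM⟩ := isCompact_univ.exists_bound_of_continuousOn hfc.continuousOn
  have hfM (x : X) : f x ≤ M := (le_abs_self _).trans (hM x trivial)
  obtain ⟨x₀⟩ := ‹Nonempty X›
  have hM0 : 0 < M := (hfpos x₀).trans_le (hfM x₀)
  have hw (i : ι) (x : X) : 0 ≤ w i x := (h.weight_mem i x).1.le
  obtain ⟨C, hC, δ, -, κ, hκ, hmass⟩ := h.exists_transferOp_pow_indicator_closedBall_le ht hr hm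
    (fun x => hmf x trivial) hf
  refine ⟨(M * C)⁻¹, by positivity, fun s x ℓ hℓ hcov => ?_⟩
  obtain ⟨n, hn⟩ : ∃ n, ∀ k ∈ s, δ * κ ^ n ≤ ℓ k := by
    have hlim : Tendsto (fun n => δ * κ ^ n) atTop (𝓝 0) := by
      simpa using (tendsto_pow_atTop_nhds_zero_of_lt_one hκ.1.le hκ.2).const_mul δ
    exact ((s.eventually_all).2 fun k _ => hlim.eventually_le_const (hℓ k)).exists
  have hsum : (transferOp φ w t ^ n) f ≤ (M * C * ∑ k ∈ s, ℓ k ^ t) • (transferOp φ w t ^ n) f :=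
    calc (transferOp φ w t ^ n) f
        ≤ (transferOp φ w t ^ n) (M • ∑ k ∈ s, (closedBall (x k) (ℓ k)).indicator 1) :=
          monotone_transferOp_pow hw t n (le_smul_sum_indicator_of_cover hM0.le hfM hcov)
      _ = M • ∑ k ∈ s, (transferOp φ w t ^ n) ((closedBall (x k) (ℓ k)).indicator 1) := by
          rw [map_smul, map_sum]
      _ ≤ M • ∑ k ∈ s, (C * ℓ k ^ t) • (transferOp φ w t ^ n) f :=
          smul_le_smul_of_nonneg_left
            (Finset.sum_le_sum fun k hk => hmass n (x k) (ℓ k) (hn k hk)) hM0.le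
      _ = (M * C * ∑ k ∈ s, ℓ k ^ t) • (transferOp φ w t ^ n) f := by
          rw [← Finset.sum_smul, ← Finset.mul_sum, smul_smul, mul_assoc]
  have hpos : 0 < (transferOp φ w t ^ n) f x₀ := by
    refine (hfpos x₀).trans_le (le_transferOp_pow hw (fun x => ?_) n x₀)
    exact (le_mul_of_one_le_left (hfpos x).le hr.le).trans (hf x)
  rw [inv_le_iff_one_le_mul₀' (by positivity)]
  exact le_of_mul_le_mul_right (by simpa using hsum x₀) hpos

lemma le_dimH_univ [Fintype ι] [Nonempty X] {t : ℝ} (ht : 0 < t) {r : ℝ} (hr : 1 < r) {f : X → ℝ}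
    (hfc : Continuous f) (hfpos : ∀ x, 0 < f x) (hf : r • f ≤ transferOp φ w t f) :
    ENNReal.ofReal t ≤ dimH (univ : Set X) := by
  borelize X
  obtain ⟨c, hc, hcov⟩ := h.exists_pos_le_sum_rpow_of_cover ht hr hfc hfpos hf
  refine le_dimH_of_hausdorffMeasure_ne_zero (d := t.toNNReal) ?_
  rw [Real.coe_toNNReal t ht.le]
  exact hausdorffMeasure_ne_zero_of_forall_finite_cover isCompact_univ ht hc hcov

theorem lt_dimH_univ [Fintype ι] [Nonempty X] {t : ℝ} (ht : 0 ≤ t) {f : X → ℝ}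
    (hfc : Continuous f) (hfpos : ∀ x, 0 < f x) (hf : ∀ x, f x < transferOp φ w t f x) :
    ENNReal.ofReal t < dimH (univ : Set X) := by
  obtain ⟨r, hr, hrf⟩ := exists_one_lt_smul_le hfc (h.continuous_transferOp t hfc) hf
  obtain ⟨a, ha, haw⟩ := h.exists_pos_le_weight
  obtain ⟨u, ⟨hu, -⟩, hur⟩ := exists_mem_Ioo_one_lt_rpow_mul ha hr one_pos
  have hle : (a ^ u * r) • f ≤ transferOp φ w (t + u) f :=
    calc (a ^ u * r) • f = a ^ u • (r • f) := mul_smul ..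
      _ ≤ a ^ u • transferOp φ w t f :=
          smul_le_smul_of_nonneg_left hrf (Real.rpow_nonneg ha.le _)
      _ ≤ transferOp φ w (t + u) f :=
          rpow_smul_transferOp_le ha haw hu.le fun x => (hfpos x).le
  exact ((ENNReal.ofReal_lt_ofReal_iff (by positivity)).2 (by linarith)).trans_le
    (h.le_dimH_univ (by positivity) hur hfc hfpos hle)

lemma dimH_univ_le [Fintype ι] {t : ℝ} (ht : 0 < t) {r : ℝ} (hr : 1 < r) {g : X → ℝ}
    (hgc : Continuous g) (hgpos : ∀ x, 0 < g x) (hg : r • transferOp φ w t g ≤ g) :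
    dimH (univ : Set X) ≤ ENNReal.ofReal t := by
  borelize X
  obtain ⟨ρ, hρ, hwρ⟩ := h.exists_weight_le_lt_one
  have hpow : ∀ᶠ η in 𝓝[>] (1 : ℝ), η ^ t < r := nhdsWithin_le_nhds
    ((Real.continuousAt_rpow_const _ _ (Or.inr ht.le)).eventually_lt_const (by simpa))
  have hmul : ∀ᶠ η in 𝓝[>] (1 : ℝ), η * ρ < 1 := nhdsWithin_le_nhds
    ((continuous_mul_const ρ).continuousAt.eventually_lt_const (by simpa using hρ.2))
  obtain ⟨η, ⟨hηr, hηρ⟩, hη : 1 < η⟩ := ((hpow.and hmul).and self_mem_nhdsWithin).exists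
  have hη0 : 0 < η := one_pos.trans hη
  obtain ⟨δ, hδ, himage⟩ := h.exists_image_closedBall_subset hη
  have hρ0 : 0 < ρ := hρ.1
  have hηw (i : ι) (x : X) : η * w i x ∈ Icc 0 (η * ρ) :=
    ⟨mul_nonneg hη0.le (h.weight_mem i x).1.le, mul_le_mul_of_nonneg_left (hwρ i x) hη0.le⟩
  have hηg : transferOp φ (fun i x => η * w i x) t g ≤ g := by
    rw [transferOp_const_mul_weight (fun i x => (h.weight_mem i x).1.le) hη0.le]
    refine (smul_le_smul_of_nonneg_right hηr.le fun x => ?_).trans hg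
    exact Finset.sum_nonneg fun i _ =>
      mul_nonneg (Real.rpow_nonneg (h.weight_mem i x).1.le t) (hgpos _).le
  rw [ENNReal.ofReal]
  refine dimH_le_of_hausdorffMeasure_ne_top ?_
  rw [Real.coe_toNNReal t ht.le]
  exact hausdorffMeasure_univ_ne_top (fun x => Prod.exists.1 (h.bijective.2 x))
    ⟨by positivity, hηρ⟩ hηw hδ himage ht.le hgc hgpos hηg

theorem dimH_univ_lt [Fintype ι] {t : ℝ} (ht : 0 < t) {g : X → ℝ} (hgc : Continuous g)
    (hgpos : ∀ x, 0 < g x) (hg : ∀ x, transferOp φ w t g x < g x) :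
    dimH (univ : Set X) < ENNReal.ofReal t := by
  obtain ⟨r, hr, hrg⟩ := exists_one_lt_smul_le (h.continuous_transferOp t hgc) hgc hg
  obtain ⟨a, ha, haw⟩ := h.exists_pos_le_weight
  obtain ⟨u, ⟨hu, hut⟩, hur⟩ := exists_mem_Ioo_one_lt_rpow_mul ha hr ht
  have hle : (a ^ u * r) • transferOp φ w (t - u) g ≤ g :=
    calc (a ^ u * r) • transferOp φ w (t - u) g = r • a ^ u • transferOp φ w (t - u) g := by
          rw [mul_comm, mul_smul]
      _ ≤ r • transferOp φ w (t - u + u) g := smul_le_smul_of_nonneg_left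
          (rpow_smul_transferOp_le ha haw hu.le fun x => (hgpos x).le) (by linarith)
      _ ≤ g := by rwa [sub_add_cancel]
  exact (h.dimH_univ_le (sub_pos.2 hut) hur hgc hgpos hle).trans_lt
    ((ENNReal.ofReal_lt_ofReal_iff ht).2 (by linarith))

end IsConformalIFS

end ConformalIFS

section Decimation

open Uniformity

lemma abs_units_cast (ε : ℤˣ) : |((ε : ℤ) : ℝ)| = 1 := by
  exact_mod_cast Int.isUnit_iff_abs_eq.1 ε.isUnit

lemma S_mul_five_sub {ε x : ℝ} (hε : |ε| = 1) (hx : x ≤ 25 / 4) :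
    S ε x * (5 - S ε x) = x := by
  have hsq : √(25 - 4 * x) ^ 2 = 25 - 4 * x := Real.sq_sqrt (by linarith)
  have hεsq : ε ^ 2 = 1 := by rw [← sq_abs, hε, one_pow]
  unfold S
  linear_combination -(√(25 - 4 * x) ^ 2 / 4) * hεsq - hsq / 4

lemma abs_S_sub_S_mul {ε x y : ℝ} (hε : |ε| = 1) (hx : x ≤ 25 / 4) (hy : y ≤ 25 / 4) :
    |S ε x - S ε y| * (√(25 - 4 * x) + √(25 - 4 * y)) = 2 * |x - y| := by
  have hsqx : √(25 - 4 * x) ^ 2 = 25 - 4 * x := Real.sq_sqrt (by linarith)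
  have hsqy : √(25 - 4 * y) ^ 2 = 25 - 4 * y := Real.sq_sqrt (by linarith)
  have hmul : (S ε x - S ε y) * (√(25 - 4 * x) + √(25 - 4 * y)) = 2 * ε * (y - x) := by
    unfold S
    linear_combination ε / 2 * (hsqx - hsqy)
  calc |S ε x - S ε y| * (√(25 - 4 * x) + √(25 - 4 * y))
      = |2 * ε * (y - x)| := by rw [← hmul, abs_mul, abs_of_nonneg (a := √_ + √_) (by positivity)]
    _ = 2 * |x - y| := by rw [abs_mul, abs_mul, hε, abs_two, mul_one, abs_sub_comm]

lemma continuous_S (ε : ℝ) : Continuous (S ε) := by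
  unfold S
  fun_prop

lemma mapsTo_S_Icc {ε : ℝ} (hε : |ε| ≤ 1) : MapsTo (S ε) (Icc 0 5) (Icc 0 5) := fun x hx => by
  have hsqrt : √(25 - 4 * x) ≤ 5 := Real.sqrt_le_iff.2 ⟨by norm_num, by linarith [hx.1]⟩
  have habs : |ε * √(25 - 4 * x)| ≤ 5 := by
    rw [abs_mul, abs_of_nonneg (Real.sqrt_nonneg _)]
    exact (mul_le_of_le_one_left (Real.sqrt_nonneg _) hε).trans hsqrt
  obtain ⟨hlow, hupp⟩ := abs_le.1 habs
  exact ⟨by unfold S; linarith, by unfold S; linarith⟩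

lemma iUnion_units_image_S (J : Set ℝ) :
    ⋃ ε : ℤˣ, S ε '' J = S (-1) '' J ∪ S 1 '' J := by
  refine Subset.antisymm (iUnion_subset fun ε => ?_) (union_subset ?_ ?_)
  · rcases Int.units_eq_one_or ε with rfl | rfl <;> simp
  · simpa using subset_iUnion (fun ε : ℤˣ => S ε '' J) (-1)
  · simpa using subset_iUnion (fun ε : ℤˣ => S ε '' J) 1

lemma continuousOn_L {K : Set ℝ} (hK : K ⊆ Iio (25 / 4)) (hmaps : ∀ ε : ℤˣ, MapsTo (S ε) K K)
    (t : ℝ) {f : ℝ → ℝ} (hf : ContinuousOn f K) : ContinuousOn (L t f) K := by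
  have hcomp (ε : ℤˣ) : ContinuousOn (fun x => f (S ε x)) K :=
    hf.comp (continuous_S ε).continuousOn (hmaps ε)
  have hweight : ContinuousOn (fun x : ℝ => (25 - 4 * x) ^ (-t / 2)) K :=
    ContinuousOn.rpow_const (by fun_prop) fun x hx => Or.inl (by linarith [mem_Iio.1 (hK hx)])
  refine (hweight.mul ((hcomp (-1)).add (hcomp 1))).congr fun x _ => ?_
  simp [L]

variable {J : Set ℝ}

/-- The inverse branch `S ε`, where `ε` ranges over `ℤˣ = {1, -1}`, as a self-map of an invariant
set `J`. -/
noncomputable def decimationBranch (hJ : ∀ ε : ℤˣ, MapsTo (S ε) J J) (ε : ℤˣ) : J → J :=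
  (hJ ε).restrict

/-- The absolute value of the derivative of `S ε` on `J`, for either sign `ε`. -/
noncomputable def decimationWeight (J : Set ℝ) (_ : ℤˣ) (x : J) : ℝ := (√(25 - 4 * (x : ℝ)))⁻¹

lemma transferOp_decimation (hJ : ∀ ε : ℤˣ, MapsTo (S ε) J J) (hsub : J ⊆ Iic (25 / 4)) (t : ℝ)
    (f : ℝ → ℝ) (x : J) :
    transferOp (decimationBranch hJ) (decimationWeight J) t (J.domRestrict f) x = L t f x := by
  have hx : 0 ≤ 25 - 4 * (x : ℝ) := by linarith [mem_Iic.1 (hsub x.2)]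
  have hw : (√(25 - 4 * (x : ℝ)))⁻¹ ^ t = (25 - 4 * (x : ℝ)) ^ (-t / 2) := by
    rw [Real.sqrt_eq_rpow, ← Real.rpow_neg hx, ← Real.rpow_mul hx]
    congr 1; ring
  rw [transferOp_apply, UnitsInt.univ, Finset.sum_pair (by decide), L, mul_add, add_comm]
  simp [decimationBranch, decimationWeight, hw]

lemma bijective_decimationBranch (hJ : ∀ ε : ℤˣ, MapsTo (S ε) J J) (hsub : J ⊆ Iio (25 / 4))
    (hsurj : J ⊆ ⋃ ε : ℤˣ, S ε '' J) :
    Function.Bijective fun p : ℤˣ × J => decimationBranch hJ p.1 p.2 := by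
  refine ⟨fun ⟨ε, x⟩ ⟨ε', y⟩ heq => ?_, fun x => ?_⟩
  · have hS : S ε x = S ε' y := congrArg Subtype.val heq
    have hR (ε : ℤˣ) (x : J) : S ε x * (5 - S ε x) = x :=
      S_mul_five_sub (abs_units_cast ε) (hsub x.2).le
    have hxy : x = y := Subtype.ext (by rw [← hR ε x, hS, hR ε' y])
    have hsqrt : 0 < √(25 - 4 * (y : ℝ)) := Real.sqrt_pos.2 (by linarith [mem_Iio.1 (hsub y.2)])
    have hε : ((ε : ℤ) : ℝ) = (ε' : ℤ) := by
      rw [hxy] at hS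
      unfold S at hS
      exact mul_right_cancel₀ hsqrt.ne' (by linarith)
    exact Prod.ext (Units.ext (by exact_mod_cast hε)) hxy
  · obtain ⟨ε, y, hy, hyx⟩ := mem_iUnion.1 (hsurj x.2)
    exact ⟨(ε, ⟨y, hy⟩), Subtype.ext hyx⟩

lemma isConformalIFS_decimation (hJ : ∀ ε : ℤˣ, MapsTo (S ε) J J) (hcpt : IsCompact J)
    (hsub : J ⊆ Iio 6) (hsurj : J ⊆ ⋃ ε : ℤˣ, S ε '' J) :
    IsConformalIFS (decimationBranch hJ) (decimationWeight J) := by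
  have : CompactSpace J := isCompact_iff_compactSpace.1 hcpt
  have hlt (x : J) : (x : ℝ) < 25 / 4 := (hsub x.2).trans (by norm_num)
  have hsqrt (x : J) : 1 < √(25 - 4 * (x : ℝ)) :=
    Real.lt_sqrt_of_sq_lt (by linarith [mem_Iio.1 (hsub x.2)])
  have hpos (x : J) : 0 < √(25 - 4 * (x : ℝ)) := one_pos.trans (hsqrt x)
  have hcont : Continuous fun x : J => √(25 - 4 * (x : ℝ)) := by fun_prop
  refine ⟨bijective_decimationBranch hJ (fun x hx => hlt ⟨x, hx⟩) hsurj,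
    fun _ x => ⟨inv_pos.2 (hpos x), inv_lt_one_of_one_lt₀ (hsqrt x)⟩,
    fun _ => hcont.inv₀ fun x => (hpos x).ne', fun η hη => ?_⟩
  have hratio := eventually_uniformity_le_mul hcont hpos hη
  filter_upwards [hratio, tendsto_swap_uniformity hratio] with ⟨x, y⟩ hAB hBA ε
  have habs := abs_S_sub_S_mul (ε := ((ε : ℤ) : ℝ)) (x := x) (y := y)
    (abs_units_cast ε) (hlt x).le (hlt y).le
  set A := √(25 - 4 * (x : ℝ))
  set B := √(25 - 4 * (y : ℝ))
  set d := |S ε x - S ε y|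
  replace hAB : A ≤ η * B := hAB
  replace hBA : B ≤ η * A := hBA
  have hA : 0 < A := hpos x
  have hd : 0 ≤ d := abs_nonneg _
  change d ≤ η * (A⁻¹ * |(x : ℝ) - y|) ∧ A⁻¹ * |(x : ℝ) - y| ≤ η * d
  rw [inv_mul_eq_div, ← mul_div_assoc, le_div_iff₀ hA, div_le_iff₀ hA]
  have hηA : A ≤ η * A := le_mul_of_one_le_left hA.le hη.le
  have hupper : d * (2 * A) ≤ d * (η * (A + B)) :=
    mul_le_mul_of_nonneg_left (by linarith) hd
  have hlower : d * (A + B) ≤ d * (2 * (η * A)) :=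
    mul_le_mul_of_nonneg_left (by linarith) hd
  exact ⟨by linear_combination (hupper + η * habs) / 2, by linear_combination (hlower - habs) / 2⟩

lemma continuousOn_L_Icc (t : ℝ) {f : ℝ → ℝ} (hf : ContinuousOn f (Icc 0 5)) :
    ContinuousOn (L t f) (Icc 0 5) :=
  continuousOn_L (fun _ hx => hx.2.trans_lt (by norm_num))
    (fun ε => mapsTo_S_Icc (abs_units_cast ε).le) t hf

end Decimation

theorem stmt_6_general {t₀ t₁ : ℝ} (ht₀ : 0 ≤ t₀) (ht₁ : 0 < t₁) {f g : ℝ → ℝ} {J : Set ℝ}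
    (hsub : J ⊆ Icc 0 5) (hne : J.Nonempty) (hcl : IsClosed J) (heq : J = S (-1) '' J ∪ S 1 '' J)
    (hf : ContinuousOn f J) (hfpos : ∀ x ∈ J, 0 < f x)
    (hg : ContinuousOn g J) (hgpos : ∀ x ∈ J, 0 < g x)
    (hfL : ∀ x ∈ J, f x < L t₀ f x) (hgL : ∀ x ∈ J, L t₁ g x < g x) :
    ENNReal.ofReal t₀ < dimH J ∧ dimH J < ENNReal.ofReal t₁ := by
  have hlt (b : ℝ) (hb : 5 < b) : J ⊆ Iio b := fun x hx => (hsub hx).2.trans_lt hb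
  have hunion : J = ⋃ ε : ℤˣ, S ε '' J := by rwa [iUnion_units_image_S]
  have hJ (ε : ℤˣ) : MapsTo (S ε) J J := fun x hx =>
    hunion.ge (mem_iUnion.2 ⟨ε, mem_image_of_mem _ hx⟩)
  have hcpt : IsCompact J := isCompact_Icc.of_isClosed_subset hcl hsub
  have : CompactSpace J := isCompact_iff_compactSpace.1 hcpt
  have : Nonempty J := hne.to_subtype
  have hIFS := isConformalIFS_decimation hJ hcpt (hlt 6 (by norm_num)) hunion.le
  have hL (t : ℝ) (u : ℝ → ℝ) (x : J) :
      transferOp (decimationBranch hJ) (decimationWeight J) t (J.domRestrict u) x = L t u x :=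
    transferOp_decimation hJ (fun x hx => (mem_Iio.1 (hlt (25 / 4) (by norm_num) hx)).le) t u x
  have hdim : dimH J = dimH (univ : Set J) := by
    rw [← (isometry_subtype_coe (s := J)).dimH_image, image_univ, Subtype.range_coe]
  rw [hdim]
  exact ⟨hIFS.lt_dimH_univ ht₀ hf.domRestrict (fun x => hfpos x x.2)
      fun x => (hfL x x.2).trans_eq (hL t₀ f x).symm,
    hIFS.dimH_univ_lt ht₁ hg.domRestrict (fun x => hgpos x x.2)
      fun x => (hL t₁ g x).trans_lt (hgL x x.2)⟩

theorem stmt_6 (t₀ t₁ : ℝ) (ht₀ : 0 < t₀) (ht₀₁ : t₀ < t₁) (ht₁ : t₁ < 1)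
    (f g : ℝ → ℝ)
    (hf : ContinuousOn f (Set.Icc 0 5)) (hfpos : ∀ x ∈ Set.Icc (0:ℝ) 5, 0 < f x)
    (hg : ContinuousOn g (Set.Icc 0 5)) (hgpos : ∀ x ∈ Set.Icc (0:ℝ) 5, 0 < g x)
    (hinf : 1 < sInf ((fun x => L t₀ f x / f x) '' Set.Icc 0 5))
    (hsup : sSup ((fun x => L t₁ g x / g x) '' Set.Icc 0 5) < 1)
    (J : Set ℝ) (hsub : J ⊆ Set.Icc 0 5) (hne : J.Nonempty) (hcl : IsClosed J)
    (heq : J = S (-1) '' J ∪ S 1 '' J)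
    (hmin : ∀ J' : Set ℝ, J' ⊆ Set.Icc 0 5 → J'.Nonempty → IsClosed J' →
      J' = S (-1) '' J' ∪ S 1 '' J' → J ⊆ J') :
    ENNReal.ofReal t₀ < dimH J ∧ dimH J < ENNReal.ofReal t₁ := by
  have hfL := forall_lt_of_one_lt_sInf_div isCompact_Icc hf (continuousOn_L_Icc t₀ hf) hfpos hinf
  have hgL := forall_lt_of_sSup_div_lt_one isCompact_Icc hg (continuousOn_L_Icc t₁ hg) hgpos hsup
  exact stmt_6_general ht₀.le (ht₀.trans ht₀₁) hsub hne hcl heq (hf.mono hsub)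
    (fun x hx => hfpos x (hsub hx)) (hg.mono hsub) (fun x hx => hgpos x (hsub hx))
    (fun x hx => hfL x (hsub hx)) (fun x hx => hgL x (hsub hx))
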